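/- Let A = [[X, α],[β, Y]] be an even (k|l)-supermatrix over Λ with X invertible, set m := k+l, and let i, j ∈ {k+1,…,m} (both indices odd). Assume the (m−1)×(m−1) matrix A^{ij}, obtained from A by deleting row i and column j, is invertible over Λ. Then A^{ij} is (with the inherited indexing) an even (k|l−1)-supermatrix whose even-even block X is invertible, and the quasideterminant |A|_{ij} := a_{ij} − Σ_{p≠j, q≠i} a_{ip}·((A^{ij})⁻¹)_{pq}·a_{qj} (where the rows of (A^{ij})⁻¹ are indexed by {1,…,m}∖{j} and its columns by {1,…,m}∖{i}) satisfies |A|_{ij}·ber*(A^{ij}) = (−1)^{i+j}·ber*(A). -/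

import Mathlib

noncomputable section

open ExteriorAlgebra

/-- `Λ n`: the exterior algebra of `ℂⁿ` (with its `n` odd generators `βᵢ`). -/
abbrev SuperAlg (n : ℕ) : Type := ExteriorAlgebra ℂ (Fin n → ℂ)

/-- The even part `Λ₀` of the exterior algebra, i.e. the degree-`0̄` part of its `ℤ₂`-grading. -/
def evenPart (n : ℕ) : Submodule ℂ (SuperAlg n) :=
  CliffordAlgebra.evenOdd (0 : QuadraticForm ℂ (Fin n → ℂ)) 0

/-- The odd part `Λ₁` of the exterior algebra, i.e. the degree-`1̄` part of its `ℤ₂`-grading. -/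
def oddPart (n : ℕ) : Submodule ℂ (SuperAlg n) :=
  CliffordAlgebra.evenOdd (0 : QuadraticForm ℂ (Fin n → ℂ)) 1

/-- The determinant of a square matrix over a (possibly noncommutative) ring, given by the
Leibniz formula, the product over each permutation being taken in the canonical order of the
index set.  For matrices whose entries lie in a central commutative subring (such as `Λ₀ ⊆ Λ`)
this is the usual determinant. -/
def ncdet {R : Type*} [Ring R] {k : ℕ} (M : Matrix (Fin k) (Fin k) R) : R :=
  ∑ σ : Equiv.Perm (Fin k), ((Equiv.Perm.sign σ : ℤˣ) : ℤ) • (List.ofFn fun i => M (σ i) i).prod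

/-- The even-even block `X` of a `(k|l)`-block matrix. -/
def Xblk (n k l : ℕ) (A : Matrix (Fin (k + l)) (Fin (k + l)) (SuperAlg n)) :
    Matrix (Fin k) (Fin k) (SuperAlg n) :=
  fun i j => A (Fin.castAdd l i) (Fin.castAdd l j)

/-- The even-odd block `α` of a `(k|l)`-block matrix. -/
def alphaBlk (n k l : ℕ) (A : Matrix (Fin (k + l)) (Fin (k + l)) (SuperAlg n)) :
    Matrix (Fin k) (Fin l) (SuperAlg n) :=
  fun i j => A (Fin.castAdd l i) (Fin.natAdd k j)

/-- The odd-even block `β` of a `(k|l)`-block matrix. -/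
def betaBlk (n k l : ℕ) (A : Matrix (Fin (k + l)) (Fin (k + l)) (SuperAlg n)) :
    Matrix (Fin l) (Fin k) (SuperAlg n) :=
  fun i j => A (Fin.natAdd k i) (Fin.castAdd l j)

/-- The odd-odd block `Y` of a `(k|l)`-block matrix. -/
def Yblk (n k l : ℕ) (A : Matrix (Fin (k + l)) (Fin (k + l)) (SuperAlg n)) :
    Matrix (Fin l) (Fin l) (SuperAlg n) :=
  fun i j => A (Fin.natAdd k i) (Fin.natAdd k j)

/-- `A` is an even `(k|l)`-supermatrix: the diagonal blocks `X`, `Y` have entries in `Λ₀` and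
the off-diagonal blocks `α`, `β` have entries in `Λ₁`. -/
def IsEvenSupermatrix (n k l : ℕ) (A : Matrix (Fin (k + l)) (Fin (k + l)) (SuperAlg n)) : Prop :=
  (∀ i j, Xblk n k l A i j ∈ evenPart n) ∧ (∀ i j, Yblk n k l A i j ∈ evenPart n) ∧
  (∀ i j, alphaBlk n k l A i j ∈ oddPart n) ∧ (∀ i j, betaBlk n k l A i j ∈ oddPart n)

/-- The Berezinian `ber(A) = det(X − α·Y⁻¹·β)·det(Y)⁻¹` (defined when `Y` is invertible). -/
def ber (n k l : ℕ) (A : Matrix (Fin (k + l)) (Fin (k + l)) (SuperAlg n)) : SuperAlg n :=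
  ncdet (Xblk n k l A - alphaBlk n k l A * Ring.inverse (Yblk n k l A) * betaBlk n k l A) *
    Ring.inverse (ncdet (Yblk n k l A))

/-- The inverse Berezinian `ber*(A) = det(X)⁻¹·det(Y − β·X⁻¹·α)` (defined when `X` is
invertible). -/
def berStar (n k l : ℕ) (A : Matrix (Fin (k + l)) (Fin (k + l)) (SuperAlg n)) : SuperAlg n :=
  Ring.inverse (ncdet (Xblk n k l A)) *
    ncdet (Yblk n k l A - betaBlk n k l A * Ring.inverse (Xblk n k l A) * alphaBlk n k l A)
/-- The canonical (order-preserving) embedding of `Fin N` onto the complement of `i` in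
`Fin M`, where `M = N + 1`; `skipIdx h i p` is the `p`-th element of `{0, …, M-1} ∖ {i}`. -/
def skipIdx {N M : ℕ} (h : N + 1 = M) (i : Fin M) : Fin N → Fin M :=
  fun p => Fin.cast h ((Fin.cast h.symm i).succAbove p)

/-- The matrix `A^{ij}` obtained from the square matrix `A` by deleting row `i` and column `j`,
with rows and columns reindexed by the order-preserving identifications with `Fin N`. -/
def delRC {R : Type*} [Ring R] {N M : ℕ} (h : N + 1 = M) (A : Matrix (Fin M) (Fin M) R)
    (i j : Fin M) : Matrix (Fin N) (Fin N) R :=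
  fun p q => A (skipIdx h i p) (skipIdx h j q)

/-- The Gelfand–Retakh quasideterminant
`|A|_{ij} = a_{ij} − Σ_{p≠j, q≠i} a_{ip}·((A^{ij})⁻¹)_{pq}·a_{qj}`, where the rows of
`(A^{ij})⁻¹` are indexed by the complement of `j` and its columns by the complement of `i`
(both via their order-preserving identifications with `Fin N`). -/
def quasidet {R : Type*} [Ring R] {N M : ℕ} (h : N + 1 = M) (A : Matrix (Fin M) (Fin M) R)
    (i j : Fin M) : R :=
  A i j - ∑ p : Fin N, ∑ q : Fin N,
    A i (skipIdx h j p) * (Ring.inverse (delRC h A i j)) p q * A (skipIdx h i q) j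

/-! Let `S = Y - βX⁻¹α` be the Schur complement of `X`.  A vector `v` extends to
`w = (-X⁻¹αv, v)` with `Aw = (0, Sv)`.  Take for `v` the cofactors of the `i`-th row of `S`, so that
`Sv = det S · eᵢ`.  The quasideterminant satisfies `|A|ᵢⱼ wⱼ = c` whenever `Aw = c eᵢ`, hence
`|A|ᵢⱼ · (±det Sⁱʲ) = det S`, and `Sⁱʲ` is the Schur complement of `X` in `Aⁱʲ`.  The entries of `X`
and `S` are central because even elements are: this makes cofactor expansion available and lets
`(det X)⁻¹` pass through `|A|ᵢⱼ`. -/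

section Central

lemma commute_ringInverse_right {M₀ : Type*} [MonoidWithZero M₀] {a b : M₀} (hab : Commute a b) :
    Commute a (Ring.inverse b) := by
  by_cases hb : IsUnit b
  · obtain ⟨u, rfl⟩ := hb
    simpa only [Ring.inverse_unit] using hab.units_inv_right
  · simp only [Ring.inverse_non_unit b hb, Commute.zero_right]

variable {R : Type*} [Ring R]

lemma ringInverse_apply_mem_center {m : Type*} [Fintype m] [DecidableEq m] {M : Matrix m m R}
    (hM : ∀ p q, M p q ∈ Subring.center R) (p q : m) :
    Ring.inverse M p q ∈ Subring.center R := by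
  refine Subring.mem_center_iff.2 fun r => ?_
  have scalar_commutes : Commute (Matrix.scalar m r) M :=
    Matrix.scalar_commute_iff.2 (Matrix.ext fun a b => Subring.mem_center_iff.1 (hM a b) r)
  simpa using congrFun₂ (commute_ringInverse_right scalar_commutes).eq p q

lemma exists_map_subtype_center {m p : Type*} {M : Matrix m p R}
    (hM : ∀ i j, M i j ∈ Subring.center R) :
    ∃ C : Matrix m p (Subring.center R), C.map (Subring.center R).subtype = M :=
  ⟨fun i j => ⟨M i j, hM i j⟩, rfl⟩

end Central

section Determinant

variable {R : Type*} [Ring R] {k : ℕ}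

lemma ncdet_map {S : Type*} [CommRing S] (f : S →+* R) (M : Matrix (Fin k) (Fin k) S) :
    ncdet (M.map f) = f M.det := by
  simp only [ncdet, Matrix.det_apply, map_sum]
  refine Finset.sum_congr rfl fun σ _ => ?_
  rw [← List.prod_ofFn, Units.smul_def, map_zsmul, map_list_prod, List.map_ofFn]
  rfl

lemma ncdet_mem_center {M : Matrix (Fin k) (Fin k) R} (hM : ∀ i j, M i j ∈ Subring.center R) :
    ncdet M ∈ Subring.center R := by
  obtain ⟨C, rfl⟩ := exists_map_subtype_center hM
  rw [ncdet_map]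
  exact C.det.2

lemma mulVec_cofactors_eq_single {M : Matrix (Fin (k + 1)) (Fin (k + 1)) R}
    (hM : ∀ i j, M i j ∈ Subring.center R) (i : Fin (k + 1)) :
    M.mulVec (fun j => (-1 : ℤ) ^ (i + j : ℕ) • ncdet (M.submatrix i.succAbove j.succAbove)) =
      Pi.single i (ncdet M) := by
  obtain ⟨C, rfl⟩ := exists_map_subtype_center hM
  set f := (Subring.center R).subtype
  have cofactors_eq_adjugate : (fun j : Fin (k + 1) => (-1 : ℤ) ^ (i + j : ℕ) •
      ncdet ((C.map f).submatrix i.succAbove j.succAbove)) = f ∘ C.adjugate.col i := by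
    funext j
    rw [Matrix.submatrix_map, ncdet_map, Function.comp_apply, Matrix.col_apply,
      Matrix.adjugate_fin_succ_eq_det_submatrix, ← map_zsmul, zsmul_eq_mul]
    push_cast
    rfl
  have mulVec_adjugate_col : C.mulVec (C.adjugate.col i) = Pi.single i C.det := by
    rw [← Matrix.mulVec_single_one, ← Matrix.cramer_eq_adjugate_mulVec, Matrix.mulVec_cramer,
      ← Pi.single_smul', smul_eq_mul, mul_one]
  funext p
  rw [cofactors_eq_adjugate, ← RingHom.map_mulVec, mulVec_adjugate_col, ncdet_map,
    Pi.apply_single (fun _ => f) fun _ => map_zero f]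

end Determinant

lemma quasidet_mul_eq_of_mulVec_eq_single {R : Type*} [Ring R] {N M : ℕ} (h : N + 1 = M)
    {A : Matrix (Fin M) (Fin M) R} {i j : Fin M} (hdel : IsUnit (delRC h A i j))
    {w : Fin M → R} {c : R} (hw : A.mulVec w = Pi.single i c) :
    quasidet h A i j * w j = c := by
  subst h
  set D := delRC rfl A i j
  let w' : Fin N → R := fun p => w (j.succAbove p)
  let column : Fin N → R := fun q => A (i.succAbove q) j * w j
  have row_expansion (p : Fin (N + 1)) :
      A p j * w j + ∑ q, A p (j.succAbove q) * w' q = (Pi.single i c : Fin (N + 1) → R) p := by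
    rw [← hw, Matrix.mulVec, dotProduct, Fin.sum_univ_succAbove _ j]
  have mulVec_w' : D.mulVec w' = -column := by
    funext q
    have hrow := row_expansion (i.succAbove q)
    rw [Pi.single_eq_of_ne (Fin.succAbove_ne i q)] at hrow
    exact eq_neg_of_add_eq_zero_right hrow
  have w'_eq : w' = -(Ring.inverse D).mulVec column := by
    rw [← Matrix.mulVec_neg, ← mulVec_w', Matrix.mulVec_mulVec, Ring.inverse_mul_cancel D hdel,
      Matrix.one_mulVec]
  calc quasidet rfl A i j * w j
      = A i j * w j - ∑ p, A i (j.succAbove p) * (Ring.inverse D).mulVec column p := by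
        simp only [quasidet, sub_mul, Finset.sum_mul, Matrix.mulVec, dotProduct, Finset.mul_sum,
          mul_assoc]
        rfl
    _ = A i j * w j + ∑ p, A i (j.succAbove p) * w' p := by
        simp only [w'_eq, Pi.neg_apply, mul_neg, Finset.sum_neg_distrib, sub_eq_add_neg]
    _ = c := by rw [row_expansion, Pi.single_eq_same]

section SchurComplement

variable {R m p : Type*} [Ring R] [Fintype m] [DecidableEq m]

/-- The Schur complement `Y - β * X⁻¹ * α` of the block `X` in `[[X, α], [β, Y]]`.  The inverse is
`Ring.inverse`, hence `0` when `X` is not invertible. -/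
def schurComplement (B : Matrix (m ⊕ p) (m ⊕ p) R) : Matrix p p R :=
  B.toBlocks₂₂ - B.toBlocks₂₁ * Ring.inverse B.toBlocks₁₁ * B.toBlocks₁₂

lemma schurComplement_submatrix {q : Type*} (B : Matrix (m ⊕ p) (m ⊕ p) R) (f g : q → p) :
    schurComplement (B.submatrix (Sum.map id f) (Sum.map id g)) =
      (schurComplement B).submatrix f g :=
  rfl

lemma mulVec_elim_eq_schurComplement_mulVec [Fintype p] {B : Matrix (m ⊕ p) (m ⊕ p) R}
    (hX : IsUnit B.toBlocks₁₁) (v : p → R) :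
    B.mulVec (Sum.elim (-(Ring.inverse B.toBlocks₁₁).mulVec (B.toBlocks₁₂.mulVec v)) v) =
      Sum.elim (0 : m → R) ((schurComplement B).mulVec v) := by
  rw [schurComplement]
  nth_rw 1 [← B.fromBlocks_toBlocks]
  simp only [Matrix.fromBlocks_mulVec, Sum.elim_comp_inl, Sum.elim_comp_inr, Matrix.mulVec_neg,
    Matrix.mulVec_mulVec, ← Matrix.mul_assoc, Ring.mul_inverse_cancel _ hX, Matrix.one_mul,
    Matrix.sub_mulVec, neg_add_eq_sub, sub_self]

end SchurComplement

section EvenBlockMatrix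

variable {R σ : Type*} [SetLike σ R] {𝒜 : ZMod 2 → σ} {m p : Type*}

/-- Even supermatrices over a ring with parity components `𝒜 0` and `𝒜 1`: the diagonal blocks have
even entries and the off-diagonal blocks odd ones.  For the grading of the exterior algebra this
unfolds to `IsEvenSupermatrix`, which fixes the order of the conjuncts. -/
def IsEvenBlockMatrix (𝒜 : ZMod 2 → σ) (B : Matrix (m ⊕ p) (m ⊕ p) R) : Prop :=
  (∀ i j, B.toBlocks₁₁ i j ∈ 𝒜 0) ∧ (∀ i j, B.toBlocks₂₂ i j ∈ 𝒜 0) ∧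
  (∀ i j, B.toBlocks₁₂ i j ∈ 𝒜 1) ∧ (∀ i j, B.toBlocks₂₁ i j ∈ 𝒜 1)

namespace IsEvenBlockMatrix

variable {B : Matrix (m ⊕ p) (m ⊕ p) R}

lemma submatrix {q : Type*} (hB : IsEvenBlockMatrix 𝒜 B) (f g : q → p) :
    IsEvenBlockMatrix 𝒜 (B.submatrix (Sum.map id f) (Sum.map id g)) :=
  ⟨hB.1, fun i j => hB.2.1 (f i) (g j), fun i j => hB.2.2.1 i (g j), fun i j => hB.2.2.2 (f i) j⟩

lemma schurComplement_apply_mem_center [Ring R] [SetLike.GradedMul 𝒜] [Fintype m] [DecidableEq m]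
    (hB : IsEvenBlockMatrix 𝒜 B) (heven : ∀ x ∈ 𝒜 0, x ∈ Subring.center R) (i j : p) :
    schurComplement B i j ∈ Subring.center R := by
  obtain ⟨hX, hY, hα, hβ⟩ := hB
  refine Subring.sub_mem _ (heven _ (hY i j)) ?_
  simp only [Matrix.mul_apply, Finset.sum_mul]
  refine Subring.sum_mem _ fun a _ => Subring.sum_mem _ fun b _ => ?_
  have hinv := ringInverse_apply_mem_center (fun p q => heven _ (hX p q)) b a
  have hβα : B.toBlocks₂₁ i b * B.toBlocks₁₂ a j ∈ 𝒜 0 :=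
    SetLike.mul_mem_graded (hβ i b) (hα a j)
  rw [Subring.mem_center_iff.1 hinv, mul_assoc]
  exact Subring.mul_mem _ hinv (heven _ hβα)

end IsEvenBlockMatrix

end EvenBlockMatrix

section SumBlocks

variable {R : Type*} [Ring R] {k l : ℕ}

/-- A matrix indexed by `Fin (k + l)`, viewed as a `2 × 2` block matrix. -/
def sumBlocks (A : Matrix (Fin (k + l)) (Fin (k + l)) R) :
    Matrix (Fin k ⊕ Fin l) (Fin k ⊕ Fin l) R :=
  A.submatrix finSumFinEquiv finSumFinEquiv

/-- The inverse Berezinian `ber* = det(X)⁻¹ * det(Y - β * X⁻¹ * α)` over an arbitrary ring, given by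
the same formula as `berStar`. -/
def inverseBerezinian (B : Matrix (Fin k ⊕ Fin l) (Fin k ⊕ Fin l) R) : R :=
  Ring.inverse (ncdet B.toBlocks₁₁) * ncdet (schurComplement B)

lemma skipIdx_finSumFinEquiv (h : (k + l) + 1 = k + (l + 1)) (i : Fin (l + 1))
    (x : Fin k ⊕ Fin l) :
    skipIdx h (Fin.natAdd k i) (finSumFinEquiv x) =
      finSumFinEquiv (Sum.map id i.succAbove x) := by
  rcases x with p | p <;> apply Fin.ext <;>
    simp only [skipIdx, Fin.succAbove, Fin.lt_def, Sum.map_inl, Sum.map_inr, id,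
      finSumFinEquiv_apply_left, finSumFinEquiv_apply_right] <;>
    split_ifs <;> simp_all <;> omega

lemma sumBlocks_delRC (h : (k + l) + 1 = k + (l + 1))
    (A : Matrix (Fin (k + (l + 1))) (Fin (k + (l + 1))) R) (i j : Fin (l + 1)) :
    sumBlocks (delRC h A (Fin.natAdd k i) (Fin.natAdd k j)) =
      (sumBlocks A).submatrix (Sum.map id i.succAbove) (Sum.map id j.succAbove) := by
  ext x y
  simp only [sumBlocks, delRC, Matrix.submatrix_apply, skipIdx_finSumFinEquiv]

lemma quasidet_mul_ncdet_minor_schurComplement (h : (k + l) + 1 = k + (l + 1))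
    {A : Matrix (Fin (k + (l + 1))) (Fin (k + (l + 1))) R}
    (hX : IsUnit (sumBlocks A).toBlocks₁₁)
    (hS : ∀ p q, schurComplement (sumBlocks A) p q ∈ Subring.center R) {i j : Fin (l + 1)}
    (hdel : IsUnit (delRC h A (Fin.natAdd k i) (Fin.natAdd k j))) :
    quasidet h A (Fin.natAdd k i) (Fin.natAdd k j) *
        ncdet ((schurComplement (sumBlocks A)).submatrix i.succAbove j.succAbove) =
      (-1 : ℤ) ^ (i + j : ℕ) • ncdet (schurComplement (sumBlocks A)) := by
  set S := schurComplement (sumBlocks A)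
  let v : Fin (l + 1) → R := fun q =>
    (-1 : ℤ) ^ (i + q : ℕ) • ncdet (S.submatrix i.succAbove q.succAbove)
  obtain ⟨u, hu⟩ : ∃ u : Fin k → R,
      (sumBlocks A).mulVec (Sum.elim u v) = Pi.single (Sum.inr i) (ncdet S) :=
    ⟨_, by rw [mulVec_elim_eq_schurComplement_mulVec hX, mulVec_cofactors_eq_single hS,
      Sum.elim_zero_single]⟩
  have hw : A.mulVec (Sum.elim u v ∘ finSumFinEquiv.symm) =
      Pi.single (Fin.natAdd k i) (ncdet S) := by
    apply finSumFinEquiv.surjective.injective_comp_right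
    dsimp only
    rw [← Matrix.submatrix_mulVec_equiv, ← sumBlocks, hu, ← finSumFinEquiv_apply_right,
      Pi.single, Pi.single, Function.update_comp_equiv, Equiv.symm_apply_apply]
    rfl
  have hquasi := quasidet_mul_eq_of_mulVec_eq_single (j := Fin.natAdd k j) h hdel hw
  rw [Function.comp_apply, finSumFinEquiv_symm_apply_natAdd, Sum.elim_inr, mul_smul_comm] at hquasi
  rw [← hquasi, smul_smul, ← pow_add, Even.neg_one_pow ⟨_, rfl⟩, one_smul]

end SumBlocks

lemma evenOdd_zero_mem_center {R M : Type*} [CommRing R] [AddCommGroup M] [Module R M]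
    {x : ExteriorAlgebra R M} (hx : x ∈ CliffordAlgebra.evenOdd (0 : QuadraticForm R M) 0) :
    x ∈ Subring.center (ExteriorAlgebra R M) := by
  have ι_mul_ι (a b : M) : ι R a * ι R b = -(ι R b * ι R a) :=
    eq_neg_of_add_eq_zero_left (ι_add_mul_swap a b)
  have ι_commutes (v : M) : Commute (ι R v) x := by
    induction x, hx using CliffordAlgebra.even_induction with
    | algebraMap r => exact (Algebra.commutes r _).symm
    | add _ _ _ _ hx hy => exact hx.add_right hy
    | ι_mul_ι_mul a b x _ hx =>
      refine Commute.mul_right ?_ hx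
      change ι R v * (ι R a * ι R b) = ι R a * ι R b * ι R v
      rw [← mul_assoc, ι_mul_ι v a, neg_mul, mul_assoc, ι_mul_ι v b, mul_neg, neg_neg, mul_assoc]
  refine Subring.mem_center_iff.2 fun y => ?_
  change Commute y x
  induction y using ExteriorAlgebra.induction with
  | algebraMap r => exact Algebra.commutes r _
  | ι v => exact ι_commutes v
  | mul _ _ ha hb => exact ha.mul_left hb
  | add _ _ ha hb => exact ha.add_left hb

theorem statement5_general {R σ : Type*} [Ring R] [SetLike σ R] (𝒜 : ZMod 2 → σ)
    [SetLike.GradedMul 𝒜] (heven : ∀ x ∈ 𝒜 0, x ∈ Subring.center R) {k l : ℕ}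
    (h : (k + l) + 1 = k + (l + 1)) {A : Matrix (Fin (k + (l + 1))) (Fin (k + (l + 1))) R}
    (hA : IsEvenBlockMatrix 𝒜 (sumBlocks A)) (hX : IsUnit (sumBlocks A).toBlocks₁₁)
    {i j : Fin (k + (l + 1))} (hi : k ≤ (i : ℕ)) (hj : k ≤ (j : ℕ))
    (hdel : IsUnit (delRC h A i j)) :
    IsEvenBlockMatrix 𝒜 (sumBlocks (delRC h A i j)) ∧
    IsUnit (sumBlocks (delRC h A i j)).toBlocks₁₁ ∧
    quasidet h A i j * inverseBerezinian (sumBlocks (delRC h A i j)) =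
      (-1 : ℤ) ^ (i + j : ℕ) • inverseBerezinian (sumBlocks A) := by
  obtain ⟨i, rfl⟩ := (Fin.range_natAdd k (l + 1)).ge hi
  obtain ⟨j, rfl⟩ := (Fin.range_natAdd k (l + 1)).ge hj
  rw [sumBlocks_delRC]
  refine ⟨hA.submatrix _ _, hX, ?_⟩
  have hcomm : Commute (quasidet h A (Fin.natAdd k i) (Fin.natAdd k j))
      (Ring.inverse (ncdet (sumBlocks A).toBlocks₁₁)) :=
    commute_ringInverse_right
      (Subring.mem_center_iff.1 (ncdet_mem_center fun p q => heven _ (hA.1 p q)) _)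
  have hsign : (-1 : ℤ) ^ ((Fin.natAdd k i : ℕ) + (Fin.natAdd k j : ℕ)) = (-1) ^ (i + j : ℕ) := by
    simp only [Fin.val_natAdd, pow_add, mul_mul_mul_comm, ← mul_pow, neg_mul_neg, one_mul, one_pow]
  change _ * (Ring.inverse (ncdet (sumBlocks A).toBlocks₁₁) * _) = _
  rw [schurComplement_submatrix, hcomm.left_comm, quasidet_mul_ncdet_minor_schurComplement h hX
    (hA.schurComplement_apply_mem_center heven) hdel, mul_smul_comm, hsign, inverseBerezinian]

/-- Let `A` be an even `(k|l+1)`-supermatrix over `Λ` with invertible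
even-even block `X`, and let `i`, `j` be odd indices.  If the matrix `A^{ij}` obtained by
deleting row `i` and column `j` is invertible over `Λ`, then `A^{ij}` is (with the inherited
indexing) an even `(k|l)`-supermatrix whose even-even block is invertible, and the
quasideterminant `|A|_{ij}` satisfies `|A|_{ij}·ber*(A^{ij}) = (−1)^{i+j}·ber*(A)`. -/
theorem statement5 (n k l : ℕ) (h : (k + l) + 1 = k + (l + 1))
    (A : Matrix (Fin (k + (l + 1))) (Fin (k + (l + 1))) (SuperAlg n))
    (hA : IsEvenSupermatrix n k (l + 1) A) (hX : IsUnit (Xblk n k (l + 1) A))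
    (i j : Fin (k + (l + 1))) (hi : k ≤ (i : ℕ)) (hj : k ≤ (j : ℕ))
    (hdel : IsUnit (delRC h A i j)) :
    IsEvenSupermatrix n k l (delRC h A i j) ∧
    IsUnit (Xblk n k l (delRC h A i j)) ∧
    quasidet h A i j * berStar n k l (delRC h A i j) =
      ((-1 : ℤ) ^ ((i : ℕ) + (j : ℕ))) • berStar n k (l + 1) A := by
  exact statement5_general (CliffordAlgebra.evenOdd 0) (fun _ => evenOdd_zero_mem_center)
    h hA hX hi hj hdel

end
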